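/- arXiv:2108.07613 — 5 statements merged into one kernel-verified Lean document; each statement's English description precedes it below -/
import Mathlib

section
/- Every monotone side-effecting constraint system over a family of complete lattices has a least solution; that is, there exists a solution η* such that η* ≤ η (pointwise) for every solution η. -/
/-- A map `η` is a solution of the side-effecting constraint system given by
left-hand sides `lhs` and right-hand sides `rhs` if, for every constraint `c`,
both the side-effects `(rhs c η).1` are accounted for pointwise and the
contribution `(rhs c η).2` to the left-hand side is accounted for. -/
def IsSolution {X : Type*} {D : X → Type*} [∀ x, CompleteLattice (D x)]
    {C : Type*} (lhs : C → X)
    (rhs : ∀ c : C, (∀ x, D x) → ((∀ x, D x) × D (lhs c)))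
    (η : ∀ x, D x) : Prop :=
  ∀ c : C, (rhs c η).1 ≤ η ∧ (rhs c η).2 ≤ η (lhs c)

/-- Every monotone side-effecting constraint system over a family of complete
lattices has a least solution. -/
theorem exists_least_solution {X : Type*} {D : X → Type*}
    [∀ x, CompleteLattice (D x)] {C : Type*} (lhs : C → X)
    (rhs : ∀ c : C, (∀ x, D x) → ((∀ x, D x) × D (lhs c)))
    (hmono : ∀ c : C, Monotone (rhs c)) :
    ∃ ηstar : ∀ x, D x, IsSolution lhs rhs ηstar ∧
      ∀ η : ∀ x, D x, IsSolution lhs rhs η → ηstar ≤ η := by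
  refine ⟨sInf {η | IsSolution lhs rhs η}, fun c => ⟨?_, ?_⟩, fun η hη => sInf_le hη⟩
  · exact le_sInf fun η hη => (hmono c (sInf_le hη)).1.trans (hη c).1
  · rw [sInf_apply]
    exact le_iInf fun η => (hmono c (sInf_le η.2)).2.trans (η.2 c).2
end

section
/- For a monotone side-effecting constraint system over a family of complete lattices, the top element of the pointwise-ordered product is a solution, and the set of solutions is closed under arbitrary pointwise infima; consequently the pointwise infimum of the set of all solutions is itself a solution and is the least solution of the system. -/
theorem IsSolution.top {X : Type*} {D : X → Type*} [∀ x, CompleteLattice (D x)]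
    {C : Type*} (lhs : C → X)
    (rhs : ∀ c : C, (∀ x, D x) → ((∀ x, D x) × D (lhs c))) :
    IsSolution lhs rhs ⊤ :=
  fun _ => ⟨le_top, le_top⟩

theorem IsSolution.sInf {X : Type*} {D : X → Type*} [∀ x, CompleteLattice (D x)]
    {C : Type*} {lhs : C → X}
    {rhs : ∀ c : C, (∀ x, D x) → ((∀ x, D x) × D (lhs c))}
    (hmono : ∀ c : C, Monotone (rhs c)) {S : Set (∀ x, D x)}
    (hS : ∀ η ∈ S, IsSolution lhs rhs η) : IsSolution lhs rhs (sInf S) := by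
  refine fun c => ⟨le_sInf fun η hη => ?_, ?_⟩
  · exact (hmono c (sInf_le hη)).1.trans (hS η hη c).1
  · rw [sInf_apply]
    exact le_iInf fun η => (hmono c (sInf_le η.2)).2.trans (hS η η.2 c).2

/-- For a monotone side-effecting constraint system over a family of complete
lattices: the top element is a solution, solutions are closed under arbitrary
pointwise infima, and consequently the pointwise infimum of all solutions is a
solution and is the least solution. -/
theorem top_solution_inf_closed_least {X : Type*} {D : X → Type*}
    [∀ x, CompleteLattice (D x)] {C : Type*} (lhs : C → X)
    (rhs : ∀ c : C, (∀ x, D x) → ((∀ x, D x) × D (lhs c)))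
    (hmono : ∀ c : C, Monotone (rhs c)) :
    IsSolution lhs rhs (⊤ : ∀ x, D x) ∧
    (∀ S : Set (∀ x, D x), (∀ η ∈ S, IsSolution lhs rhs η) →
      IsSolution lhs rhs (sInf S)) ∧
    (IsSolution lhs rhs (sInf {η | IsSolution lhs rhs η}) ∧
      ∀ η : ∀ x, D x, IsSolution lhs rhs η →
        sInf {η | IsSolution lhs rhs η} ≤ η) := by
  exact ⟨.top lhs rhs, fun _ hS => .sInf hmono hS, .sInf hmono fun _ hη => hη,
    fun _ hη => sInf_le hη⟩
end

section
/- Let F be the induced operator of a side-effecting constraint system, defined by (F η) x = ⨆_{c ∈ C} ( ((f_c η).1) x ⊔ e_c x ), where e_c x equals (f_c η).2 (transported along the equality) if x = x_c and ⊥ otherwise. Then (i) a map η is a solution of the system if and only if F η ≤ η pointwise; (ii) if the system is monotone then F is a monotone operator on Π x, D x and the least solution of the system equals the least fixed point of F (given by Knaster–Tarski). -/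
/-- The induced operator of a side-effecting constraint system:
`(F η) x = ⨆ c, ((rhs c η).1 x ⊔ e_c x)` where `e_c x` is the contribution
`(rhs c η).2` transported along the equality if `x = lhs c`, and `⊥` otherwise. -/
noncomputable def inducedF {X : Type*} {D : X → Type*} [∀ x, CompleteLattice (D x)]
    {C : Type*} (lhs : C → X)
    (rhs : ∀ c : C, (∀ x, D x) → ((∀ x, D x) × D (lhs c)))
    (η : ∀ x, D x) : ∀ x, D x :=
  fun x => ⨆ c : C, ((rhs c η).1 x ⊔ (open Classical in if h : lhs c = x then h ▸ (rhs c η).2 else ⊥))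

theorem isSolution_iff_inducedF_le {X : Type*} {D : X → Type*}
    [∀ x, CompleteLattice (D x)] {C : Type*} (lhs : C → X)
    (rhs : ∀ c : C, (∀ x, D x) → ((∀ x, D x) × D (lhs c))) (η : ∀ x, D x) :
    IsSolution lhs rhs η ↔ inducedF lhs rhs η ≤ η := by
  constructor
  · intro h x
    refine iSup_le fun c => sup_le ((h c).1 x) ?_
    split_ifs with hx
    · subst hx
      exact (h c).2
    · exact bot_le
  · intro h c
    have hc : ∀ x, _ := fun x => sup_le_iff.mp (iSup_le_iff.mp (h x) c)
    refine ⟨fun x => (hc x).1, ?_⟩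
    simpa using (hc (lhs c)).2

theorem monotone_inducedF {X : Type*} {D : X → Type*}
    [∀ x, CompleteLattice (D x)] {C : Type*} (lhs : C → X)
    (rhs : ∀ c : C, (∀ x, D x) → ((∀ x, D x) × D (lhs c)))
    (hrhs : ∀ c, Monotone (rhs c)) : Monotone (inducedF lhs rhs) := by
  intro η₁ η₂ hη x
  refine iSup_mono fun c => sup_le_sup ((hrhs c hη).1 x) ?_
  split_ifs with hx
  · subst hx
    exact (hrhs c hη).2
  · exact le_rfl

/-- (i) `η` is a solution iff `F η ≤ η`; (ii) if the system is monotone then the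
induced operator `F` is monotone and the least solution equals the least fixed
point of `F` given by Knaster–Tarski. -/
theorem solution_iff_prefixedpoint_and_lfp {X : Type*} {D : X → Type*}
    [∀ x, CompleteLattice (D x)] {C : Type*} (lhs : C → X)
    (rhs : ∀ c : C, (∀ x, D x) → ((∀ x, D x) × D (lhs c))) :
    (∀ η : ∀ x, D x, IsSolution lhs rhs η ↔ inducedF lhs rhs η ≤ η) ∧
    ((∀ c : C, Monotone (rhs c)) →
      ∃ hF : Monotone (inducedF lhs rhs),
        IsSolution lhs rhs (OrderHom.lfp ⟨inducedF lhs rhs, hF⟩) ∧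
        ∀ η : ∀ x, D x, IsSolution lhs rhs η →
          OrderHom.lfp ⟨inducedF lhs rhs, hF⟩ ≤ η) := by
  refine ⟨isSolution_iff_inducedF_le lhs rhs, fun hrhs =>
    ⟨monotone_inducedF lhs rhs hrhs, ?_, fun η hη => ?_⟩⟩
  · exact (isSolution_iff_inducedF_le lhs rhs _).mpr
      (OrderHom.map_lfp ⟨inducedF lhs rhs, monotone_inducedF lhs rhs hrhs⟩).le
  · exact OrderHom.lfp_le _ ((isSolution_iff_inducedF_le lhs rhs η).mp hη)
end

section
/- Fixpoint transfer: let L and L' be complete lattices, F : L → L and F' : L' → L' monotone functions, and g : L → L' a map preserving arbitrary suprema (in particular g ⊥ = ⊥) such that g ∘ F = F' ∘ g. Then g maps the least fixed point of F to the least fixed point of F', i.e. g (lfp F) = lfp F'. -/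
/-- Fixpoint transfer: a map `g` preserving arbitrary suprema that intertwines
the monotone functions `F` and `F'` maps the least fixed point of `F` to the
least fixed point of `F'`. -/
theorem fixpoint_transfer {L L' : Type*} [CompleteLattice L] [CompleteLattice L']
    (F : L → L) (hF : Monotone F) (F' : L' → L') (hF' : Monotone F')
    (g : L → L')
    (hg : ∀ s : Set L, g (sSup s) = sSup (g '' s))
    (hcomm : g ∘ F = F' ∘ g) :
    g (OrderHom.lfp ⟨F, hF⟩) = OrderHom.lfp ⟨F', hF'⟩ := by
  have hcomm_apply (a : L) : g (F a) = F' (g a) := congrFun hcomm a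
  apply le_antisymm
  · refine OrderHom.lfp_induction ⟨F, hF⟩ (p := fun a => g a ≤ OrderHom.lfp ⟨F', hF'⟩) ?_ ?_
    · intro a ha _
      exact (hcomm_apply a).trans_le (OrderHom.map_le_lfp ⟨F', hF'⟩ ha)
    · intro s hs
      rw [hg]
      exact sSup_le (Set.forall_mem_image.2 hs)
  · exact OrderHom.lfp_le_fixed ⟨F', hF'⟩
      ((hcomm_apply _).symm.trans (congrArg g (OrderHom.map_lfp ⟨F, hF⟩)))
end

section
/- Injective fixpoint transfer: let L and L' be complete lattices, F : L → L and F' : L' → L' monotone functions, and g : L → L' an injective map preserving arbitrary suprema such that g ∘ F = F' ∘ g. Then for every η : L, η is the least fixed point of F if and only if g η is the least fixed point of F'. -/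
/-- Fixpoint transfer: a map preserving arbitrary suprema and intertwining two monotone
functions sends the least fixed point of one to the least fixed point of the other. -/
theorem map_lfp_of_map_sSup {L L' : Type*} [CompleteLattice L] [CompleteLattice L']
    (f : L →o L) (f' : L' →o L') (g : L → L')
    (hg : ∀ s : Set L, g (sSup s) = sSup (g '' s)) (hcomm : Function.Semiconj g f f') :
    g f.lfp = f'.lfp := by
  apply le_antisymm
  · refine f.lfp_induction (p := fun a => g a ≤ f'.lfp) (fun a ha _ => ?_) (fun s hs => ?_)
    · rw [hcomm a]
      exact f'.map_le_lfp ha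
    · rw [hg]
      exact sSup_le (Set.forall_mem_image.2 hs)
  · apply f'.lfp_le_fixed
    rw [← hcomm, f.map_lfp]

/-- Injective fixpoint transfer: if `g` is injective, preserves arbitrary
suprema, and intertwines the monotone functions `F` and `F'`, then `η` is the
least fixed point of `F` iff `g η` is the least fixed point of `F'`. -/
theorem injective_fixpoint_transfer {L L' : Type*} [CompleteLattice L]
    [CompleteLattice L']
    (F : L → L) (hF : Monotone F) (F' : L' → L') (hF' : Monotone F')
    (g : L → L') (hinj : Function.Injective g)
    (hg : ∀ s : Set L, g (sSup s) = sSup (g '' s))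
    (hcomm : g ∘ F = F' ∘ g) :
    ∀ η : L, η = OrderHom.lfp ⟨F, hF⟩ ↔ g η = OrderHom.lfp ⟨F', hF'⟩ := by
  intro η
  rw [← map_lfp_of_map_sSup ⟨F, hF⟩ ⟨F', hF'⟩ g hg (congrFun hcomm)]
  exact hinj.eq_iff.symm
end
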